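/- (Berndtsson–Chang–Lin) Let d ≥ 2 and let {λ_i}_{i=1}^∞ be a sequence of distinct points in 𝔻^d. Consider the statements: (1) there exists ε > 0 such that ∏_{j ≠ i} ρ(λ_i, λ_j) ≥ ε for every i; (2) the sequence is interpolating for H^∞(𝔻^d), i.e. for every bounded sequence {w_i} ⊂ ℂ there is a bounded analytic φ on 𝔻^d with φ(λ_i) = w_i for all i; (3) the sequence is weakly separated (there exists ε > 0 with ρ(λ_i,λ_j) ≥ ε for all i ≠ j) and the Szegő Grammian G, with entries G_{ij} = k^S(λ_i,λ_j)/√(k^S(λ_i,λ_i) k^S(λ_j,λ_j)), satisfies |∑_{i,j} a_i ā_j G_{ij}| ≤ M ∑_i |a_i|² for some M > 0 and all finitely supported complex sequences {a_i}. Then (1) implies (2) and (2) implies (3). -/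

import Mathlib

open Finset

/-- The open polydisk `𝔻^d` in `ℂ^d`. -/
def Polydisk (d : ℕ) : Set (Fin d → ℂ) := {lam | ∀ r, ‖lam r‖ < 1}

/-- The Gleason distance on the polydisk:
`ρ(ζ,λ) = sup{ |φ(ζ)| : φ analytic on 𝔻^d, sup|φ| ≤ 1, φ(λ) = 0 }`. -/
noncomputable def gleasonDist {d : ℕ} (zeta lam : Fin d → ℂ) : ℝ :=
  sSup {x : ℝ | ∃ φ : (Fin d → ℂ) → ℂ, DifferentiableOn ℂ φ (Polydisk d) ∧
    (∀ mu ∈ Polydisk d, ‖φ mu‖ ≤ 1) ∧ φ lam = 0 ∧ x = ‖φ zeta‖}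

/-- The Szegő kernel of the polydisk: `k^S(ζ,λ) = ∏_r (1 - ζʳ λ̄ʳ)⁻¹`. -/
noncomputable def szegoKernel {d : ℕ} (zeta lam : Fin d → ℂ) : ℂ :=
  ∏ r, (1 - zeta r * starRingEnd ℂ (lam r))⁻¹

/-! Assume the product condition. Among the coordinates of `λᵢ` and `λⱼ` one realizes the Gleason
distance, by the Schwarz lemma. Finitely many values are interpolated by an explicit formula in the
manner of P. W. Jones: the function for the node `λᵢ` is the square of its normalized Szegő kernel,
times Möbius factors in the realizing coordinates that vanish at the other nodes, times exponential
damping factors for those nodes `λₖ` whose realizing coordinate is at least as large in modulus as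
that of `λᵢ`. One of `i`, `k` damps the other, and this alone bounds the sum of the moduli,
uniformly in the number of nodes; a normal families argument then reaches all the nodes.

Conversely, by the open mapping theorem values bounded by one are interpolated by functions bounded
by a constant `M`. If `φ` takes the value one at `λᵢ` and zero at `λⱼ`, then `φ / M` shows that
their Gleason distance is at least `1 / M`. If `φ` takes the values `±1`, the adjoint of
multiplication by `φ` on `H²` changes the signs in a linear combination of Szegő kernels and has
norm at most `M`. Some choice of signs makes the norm squared of the combination at most the sum of
the squares of its terms, whence the Grammian is bounded by `M²`. -/

section Montel

open Metric Filter Topology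

variable {E F : Type*} [NormedAddCommGroup E] [NormedSpace ℂ E]
  [NormedAddCommGroup F] [NormedSpace ℂ F]

theorem norm_fderiv_le_of_norm_le {f : E → F} {c : E} {R C : ℝ} (hR : 0 < R)
    (hf : DifferentiableOn ℂ f (ball c R)) (hfC : ∀ z ∈ ball c R, ‖f z‖ ≤ C) :
    ‖fderiv ℂ f c‖ ≤ 2 * C / R := by
  refine Complex.norm_fderiv_le_div_of_mapsTo_ball hf (fun z hz ↦ ?_) hR
  rw [mem_closedBall, dist_eq_norm]
  linarith [norm_sub_le (f z) (f c), hfC z hz, hfC c (mem_ball_self hR)]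

/- The Schwarz lemma at order two, applied to `f` minus its linear part. -/
theorem norm_sub_sub_fderiv_le_of_norm_le {f : E → F} {c z : E} {R C : ℝ}
    (hf : DifferentiableOn ℂ f (ball c R)) (hfC : ∀ z ∈ ball c R, ‖f z‖ ≤ C)
    (hz : z ∈ ball c R) :
    ‖f z - f c - fderiv ℂ f c (z - c)‖ ≤ 4 * C * (dist z c / R) ^ 2 := by
  have hR : 0 < R := pos_of_mem_ball hz
  have hc : c ∈ ball c R := mem_ball_self hR
  have hC : 0 ≤ C := (norm_nonneg _).trans (hfC c hc)
  have hmaps : Set.MapsTo (fun w ↦ f w - fderiv ℂ f c (w - c)) (ball c R)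
      (closedBall (f c - fderiv ℂ f c (c - c)) (4 * C)) := fun w hw ↦ by
    rw [mem_closedBall, dist_eq_norm, sub_self, map_zero, sub_zero]
    have hL : ‖fderiv ℂ f c (w - c)‖ ≤ 2 * C :=
      calc ‖fderiv ℂ f c (w - c)‖ ≤ 2 * C / R * ‖w - c‖ :=
            (fderiv ℂ f c).le_of_opNorm_le (norm_fderiv_le_of_norm_le hR hf hfC) _
        _ ≤ 2 * C / R * R := by gcongr; exact (mem_ball_iff_norm.1 hw).le
        _ = 2 * C := by field_simp
    linarith [norm_sub_le (f w - fderiv ℂ f c (w - c)) (f c),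
      norm_sub_le (f w) (fderiv ℂ f c (w - c)), hfC w hw, hfC c hc]
  have hlittle : (fun w ↦ f w - fderiv ℂ f c (w - c) - (f c - fderiv ℂ f c (c - c)))
      =o[𝓝 c] fun w ↦ ‖w - c‖ ^ 1 := by
    have hfc : DifferentiableAt ℂ f c := hf.differentiableAt (isOpen_ball.mem_nhds hc)
    simpa [sub_right_comm] using hfc.hasFDerivAt.isLittleO.norm_right
  have := Complex.dist_le_mul_div_pow_of_mapsTo_ball_of_isLittleO (hf.sub (by fun_prop))
    hmaps hlittle hz
  rw [dist_eq_norm] at this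
  simpa [sub_right_comm] using this

variable [FiniteDimensional ℂ E] [FiniteDimensional ℂ F] {α : Type*} {U : Ultrafilter α}
  {f : α → E → F} {Ω : Set E} {C : ℝ}

theorem differentiableOn_of_tendsto_ultrafilter {g : E → F} (hΩ : IsOpen Ω)
    (hf : ∀ᶠ n in U, DifferentiableOn ℂ (f n) Ω ∧ ∀ z ∈ Ω, ‖f n z‖ ≤ C)
    (hg : ∀ z ∈ Ω, Tendsto (f · z) U (𝓝 (g z))) : DifferentiableOn ℂ g Ω := by
  have : ProperSpace F := FiniteDimensional.proper ℂ F
  have : ProperSpace (E →L[ℂ] F) := FiniteDimensional.proper ℂ _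
  intro c hc
  obtain ⟨R, hR, hball⟩ := isOpen_iff.1 hΩ c hc
  obtain ⟨L, -, hL⟩ := (isCompact_closedBall (0 : E →L[ℂ] F) (2 * C / R)).ultrafilter_le_nhds
    (U.map fun n ↦ fderiv ℂ (f n) c) <| by
      rw [Ultrafilter.coe_map, le_principal_iff, Filter.mem_map]
      filter_upwards [hf] with n hn
      exact mem_closedBall_zero_iff.2 <| norm_fderiv_le_of_norm_le hR (hn.1.mono hball)
        fun z hz ↦ hn.2 z (hball hz)
  have hbound : ∀ z ∈ ball c R, ‖g z - g c - L (z - c)‖ ≤ 4 * C * (dist z c / R) ^ 2 := by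
    intro z hz
    have hLz : Tendsto (fun n ↦ fderiv ℂ (f n) c (z - c)) U (𝓝 (L (z - c))) :=
      ((ContinuousLinearMap.apply ℂ F (z - c)).continuous.tendsto L).comp hL
    refine le_of_tendsto (((hg z (hball hz)).sub (hg c hc)).sub hLz).norm ?_
    filter_upwards [hf] with n hn using norm_sub_sub_fderiv_le_of_norm_le (hn.1.mono hball)
      (fun w hw ↦ hn.2 w (hball hw)) hz
  have hquad : (fun z ↦ g z - g c - L (z - c)) =O[𝓝 c] fun z ↦ ‖z - c‖ ^ 2 := by
    refine Asymptotics.IsBigO.of_bound (4 * C / R ^ 2) ?_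
    filter_upwards [ball_mem_nhds c hR] with z hz
    refine (hbound z hz).trans_eq ?_
    rw [dist_eq_norm, norm_pow, norm_norm]
    ring
  have hlittle := hquad.trans_isLittleO (Asymptotics.isLittleO_pow_sub_sub c one_lt_two)
  exact (HasFDerivAt.of_isLittleO hlittle).differentiableAt.differentiableWithinAt

theorem exists_differentiableOn_tendsto_ultrafilter (hΩ : IsOpen Ω)
    (hf : ∀ᶠ n in U, DifferentiableOn ℂ (f n) Ω ∧ ∀ z ∈ Ω, ‖f n z‖ ≤ C) :
    ∃ g : E → F, DifferentiableOn ℂ g Ω ∧ (∀ z ∈ Ω, ‖g z‖ ≤ C) ∧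
      ∀ z ∈ Ω, Tendsto (f · z) U (𝓝 (g z)) := by
  have : ProperSpace F := FiniteDimensional.proper ℂ F
  have hlim : ∀ z, ∃ y, z ∈ Ω → ‖y‖ ≤ C ∧ Tendsto (f · z) U (𝓝 y) := fun z ↦ by
    by_cases hz : z ∈ Ω
    · obtain ⟨y, hy, hlim⟩ := (isCompact_closedBall (0 : F) C).ultrafilter_le_nhds
        (U.map (f · z)) <| by
          rw [Ultrafilter.coe_map, le_principal_iff, Filter.mem_map]
          filter_upwards [hf] with n hn using mem_closedBall_zero_iff.2 (hn.2 z hz)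
      exact ⟨y, fun _ ↦ ⟨mem_closedBall_zero_iff.1 hy, hlim⟩⟩
    · exact ⟨0, fun h ↦ absurd h hz⟩
  choose g hg using hlim
  exact ⟨g, differentiableOn_of_tendsto_ultrafilter hΩ hf fun z hz ↦ (hg z hz).2,
    fun z hz ↦ (hg z hz).1, fun z hz ↦ (hg z hz).2⟩

theorem exists_interpolation_of_forall_finset {ι : Type*} {p : ι → E} {w : ι → F}
    (hΩ : IsOpen Ω) (hp : ∀ i, p i ∈ Ω)
    (h : ∀ S : Finset ι, ∃ φ : E → F, DifferentiableOn ℂ φ Ω ∧ (∀ z ∈ Ω, ‖φ z‖ ≤ C) ∧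
      ∀ i ∈ S, φ (p i) = w i) :
    ∃ φ : E → F, DifferentiableOn ℂ φ Ω ∧ (∀ z ∈ Ω, ‖φ z‖ ≤ C) ∧ ∀ i, φ (p i) = w i := by
  choose f hfd hfC hfp using h
  obtain ⟨φ, hφd, hφC, hlim⟩ := exists_differentiableOn_tendsto_ultrafilter
    (U := Ultrafilter.of atTop) hΩ (Eventually.of_forall fun S ↦ ⟨hfd S, hfC S⟩)
  refine ⟨φ, hφd, hφC, fun i ↦ tendsto_nhds_unique (hlim _ (hp i)) ?_⟩
  refine (tendsto_const_nhds.congr' ?_).mono_left (Ultrafilter.of_le atTop)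
  filter_upwards [eventually_ge_atTop {i}] with S hS
  exact (hfp S i (hS (Finset.mem_singleton_self i))).symm

end Montel

section OpenMapping

open Filter Topology
open scoped ENNReal

variable {E ι : Type*} [NormedAddCommGroup E] [NormedSpace ℂ E] {Ω : Set E}

/-- `H^∞(Ω)`, realised as the bounded functions on the whole space that are holomorphic on `Ω`;
the values off `Ω` are irrelevant. -/
def boundedHolomorphic (Ω : Set E) : Submodule ℂ (lp (fun _ : E ↦ ℂ) ∞) where
  carrier := {f | DifferentiableOn ℂ f Ω}
  add_mem' := DifferentiableOn.add
  zero_mem' := differentiableOn_const 0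
  smul_mem' c _ hf := DifferentiableOn.const_smul hf c

theorem tendsto_apply_of_tendsto_lp_infty {α : Type*} {l : Filter α}
    {f : α → lp (fun _ : ι ↦ ℂ) ∞} {g : lp (fun _ : ι ↦ ℂ) ∞} (h : Tendsto f l (𝓝 g)) (i : ι) :
    Tendsto (f · i) l (𝓝 (g i)) := by
  rw [tendsto_iff_norm_sub_tendsto_zero] at h ⊢
  exact squeeze_zero (fun _ ↦ norm_nonneg _)
    (fun a ↦ lp.norm_apply_le_norm ENNReal.top_ne_zero (f a - g) i) h

theorem isClosed_boundedHolomorphic [FiniteDimensional ℂ E] (hΩ : IsOpen Ω) :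
    IsClosed (boundedHolomorphic Ω : Set (lp (fun _ : E ↦ ℂ) ∞)) := by
  rw [isClosed_iff_ultrafilter]
  intro g U hU hmem
  have hbound : ∀ᶠ f : lp (fun _ : E ↦ ℂ) ∞ in U,
      DifferentiableOn ℂ f Ω ∧ ∀ z ∈ Ω, ‖f z‖ ≤ ‖g‖ + 1 := by
    filter_upwards [hmem, hU ((continuous_norm.tendsto g).eventually_le_const (lt_add_one _))]
      with f hf hfg
    exact ⟨hf, fun z _ ↦ (lp.norm_apply_le_norm ENNReal.top_ne_zero f z).trans hfg⟩
  exact differentiableOn_of_tendsto_ultrafilter hΩ hbound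
    fun z _ ↦ tendsto_apply_of_tendsto_lp_infty hU z

/-- Restriction of functions in `H^∞(Ω)` to the points `p i`. -/
noncomputable def sampling (Ω : Set E) (p : ι → E) :
    boundedHolomorphic Ω →L[ℂ] lp (fun _ : ι ↦ ℂ) ∞ :=
  LinearMap.mkContinuous
    { toFun f := ⟨fun i ↦ f.1 (p i), memℓp_infty ⟨‖f.1‖, by
        rintro _ ⟨i, rfl⟩
        exact lp.norm_apply_le_norm ENNReal.top_ne_zero f.1 (p i)⟩⟩
      map_add' _ _ := rfl
      map_smul' _ _ := rfl } 1 fun f ↦ by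
    rw [one_mul]
    exact lp.norm_le_of_forall_le (norm_nonneg _)
      fun i ↦ lp.norm_apply_le_norm ENNReal.top_ne_zero f.1 (p i)

theorem sampling_apply (Ω : Set E) (p : ι → E) (f : boundedHolomorphic Ω) (i : ι) :
    sampling Ω p f i = f.1 (p i) := rfl

theorem exists_mem_boundedHolomorphic {φ : E → ℂ} {C : ℝ} (hφ : DifferentiableOn ℂ φ Ω)
    (hC : ∀ z ∈ Ω, ‖φ z‖ ≤ C) : ∃ f ∈ boundedHolomorphic Ω, ∀ z ∈ Ω, f z = φ z := by
  have heq : Set.EqOn (Ω.indicator φ) φ Ω := fun z hz ↦ Set.indicator_of_mem hz φ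
  refine ⟨⟨Ω.indicator φ, memℓp_infty ⟨max C 0, ?_⟩⟩, hφ.congr heq, heq⟩
  rintro _ ⟨z, rfl⟩
  by_cases hz : z ∈ Ω
  · simpa [hz] using Or.inl (hC z hz)
  · simp [hz]

/- Banach's open mapping theorem, applied to the sampling operator. -/
theorem exists_uniform_interpolation_bound [FiniteDimensional ℂ E] {p : ι → E}
    (hΩ : IsOpen Ω) (hp : ∀ i, p i ∈ Ω)
    (h : ∀ w : ι → ℂ, (∃ Cw : ℝ, ∀ i, ‖w i‖ ≤ Cw) → ∃ φ : E → ℂ, DifferentiableOn ℂ φ Ω ∧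
      (∃ Cφ : ℝ, ∀ z ∈ Ω, ‖φ z‖ ≤ Cφ) ∧ ∀ i, φ (p i) = w i) :
    ∃ M > 0, ∀ w : ι → ℂ, (∀ i, ‖w i‖ ≤ 1) → ∃ φ : E → ℂ, DifferentiableOn ℂ φ Ω ∧
      (∀ z ∈ Ω, ‖φ z‖ ≤ M) ∧ ∀ i, φ (p i) = w i := by
  have : CompleteSpace (boundedHolomorphic Ω) := (isClosed_boundedHolomorphic hΩ).completeSpace_coe
  have hsurj : Function.Surjective (sampling Ω p) := fun w ↦ by
    obtain ⟨φ, hφ, ⟨C, hC⟩, hφw⟩ :=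
      h w ⟨‖w‖, fun i ↦ lp.norm_apply_le_norm ENNReal.top_ne_zero w i⟩
    obtain ⟨f, hf, hfφ⟩ := exists_mem_boundedHolomorphic hφ hC
    exact ⟨⟨f, hf⟩, lp.ext <| funext fun i ↦ (hfφ _ (hp i)).trans (hφw i)⟩
  obtain ⟨M, hM, hpre⟩ := (sampling Ω p).exists_preimage_norm_le hsurj
  refine ⟨M, hM, fun w hw ↦ ?_⟩
  let w' : lp (fun _ : ι ↦ ℂ) ∞ := ⟨w, memℓp_infty ⟨1, by rintro _ ⟨i, rfl⟩; exact hw i⟩⟩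
  obtain ⟨f, hfw, hfM⟩ := hpre w'
  have hw' : ‖w'‖ ≤ 1 := lp.norm_le_of_forall_le zero_le_one hw
  refine ⟨f.1, f.2, fun z _ ↦ ?_, fun i ↦ ?_⟩
  · calc ‖f.1 z‖ ≤ ‖f‖ := lp.norm_apply_le_norm ENNReal.top_ne_zero f.1 z
      _ ≤ M * ‖w'‖ := hfM
      _ ≤ M := mul_le_of_le_one_right hM.le hw'
  · rw [← sampling_apply, hfw]

end OpenMapping

section Tournament

variable {ι : Type*} {y : ι → ℝ}

theorem sum_mul_exp_neg_sum_le_le_one_sub_exp {β : Type*} [LinearOrder β] (s : ι → β)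
    (hy : ∀ i, 0 ≤ y i) (F : Finset ι) :
    ∑ i ∈ F, y i * Real.exp (-∑ k ∈ F with s k ≤ s i, y k) ≤ 1 - Real.exp (-∑ i ∈ F, y i) := by
  classical
  induction F using Finset.induction_on_max_value s with
  | empty => simp
  | insert a S ha hmax ih =>
    have hlast : (insert a S).filter (fun k ↦ s k ≤ s a) = insert a S :=
      filter_true_of_mem (by simpa using hmax)
    have hmono : ∑ i ∈ S, y i * Real.exp (-∑ k ∈ insert a S with s k ≤ s i, y k) ≤
        ∑ i ∈ S, y i * Real.exp (-∑ k ∈ S with s k ≤ s i, y k) := by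
      gcongr with i
      · exact hy i
      · exact fun k _ _ ↦ hy k
      · exact subset_insert a S
    have hexp : y a * Real.exp (-y a) ≤ 1 - Real.exp (-y a) := by
      rw [Real.exp_neg, ← div_eq_mul_inv, div_le_iff₀ (Real.exp_pos _), sub_mul,
        inv_mul_cancel₀ (Real.exp_ne_zero _)]
      linarith [Real.add_one_le_exp (y a)]
    rw [sum_insert ha, hlast, sum_insert ha, neg_add, Real.exp_add]
    nlinarith [Real.exp_pos (-∑ i ∈ S, y i)]

/- Expand the square of the left side: each pair `(i, k)` is charged to whichever of `K i k`,
`K k i` holds. -/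
theorem sum_filter_sum_le_le_two_mul {K : ι → ι → Prop} [DecidableRel K]
    (hy : ∀ i, 0 ≤ y i) (hK : ∀ i k, K i k ∨ K k i) (F : Finset ι) {t : ℝ} (ht : 0 ≤ t) :
    ∑ i ∈ F with ∑ k ∈ F with K i k, y k ≤ t, y i ≤ 2 * t := by
  set A := F.filter fun i ↦ ∑ k ∈ F with K i k, y k ≤ t
  set W := ∑ i ∈ A, y i
  have hcharge : ∑ i ∈ A, ∑ k ∈ A with K i k, y i * y k ≤ t * W := by
    rw [mul_sum]
    refine sum_le_sum fun i hi ↦ ?_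
    rw [← mul_sum, mul_comm]
    refine mul_le_mul_of_nonneg_right (le_trans ?_ (mem_filter.1 hi).2) (hy i)
    exact sum_le_sum_of_subset_of_nonneg (filter_subset_filter _ (filter_subset _ _))
      fun k _ _ ↦ hy k
  have hsquare : W * W ≤ 2 * t * W := by
    calc W * W = ∑ i ∈ A, ∑ k ∈ A, y i * y k := sum_mul_sum _ _ _ _
      _ ≤ ∑ i ∈ A, ∑ k ∈ A, ((if K i k then y i * y k else 0) +
            if K k i then y k * y i else 0) := by
          gcongr with i _ k _
          have := mul_nonneg (hy i) (hy k)
          rcases hK i k with h | h <;> split_ifs <;> linarith [mul_comm (y i) (y k)]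
      _ = ∑ i ∈ A, (∑ k ∈ A with K i k, y i * y k) +
            ∑ i ∈ A, (∑ k ∈ A with K i k, y i * y k) := by
          simp only [sum_add_distrib, sum_filter]
          congr 1
          exact sum_comm
      _ ≤ 2 * t * W := by linarith
  have hW : 0 ≤ W := sum_nonneg fun i _ ↦ hy i
  rcases hW.eq_or_lt with hW | hW
  · rw [← hW]; positivity
  · exact le_of_mul_le_mul_right hsquare hW

theorem sum_mul_exp_neg_sum_le_two {K : ι → ι → Prop} [DecidableRel K]
    (hy : ∀ i, 0 ≤ y i) (hK : ∀ i k, K i k ∨ K k i) (F : Finset ι) :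
    ∑ i ∈ F, y i * Real.exp (-∑ k ∈ F with K i k, y k) ≤ 2 := by
  set s : ι → ℝ := fun i ↦ ∑ k ∈ F with K i k, y k
  have hexponent (i : ι) : ∑ k ∈ F with s k ≤ s i, y k / 2 ≤ s i := by
    have := sum_filter_sum_le_le_two_mul hy hK F (sum_nonneg fun k _ ↦ hy k : 0 ≤ s i)
    rw [← sum_div]
    linarith
  calc ∑ i ∈ F, y i * Real.exp (-s i)
      ≤ ∑ i ∈ F, 2 * (y i / 2 * Real.exp (-∑ k ∈ F with s k ≤ s i, y k / 2)) := by
        refine sum_le_sum fun i _ ↦ ?_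
        rw [← mul_assoc, mul_div_cancel₀ _ two_ne_zero]
        gcongr
        · exact hy i
        · exact hexponent i
    _ ≤ 2 * (1 - Real.exp (-∑ i ∈ F, y i / 2)) := by
        rw [← mul_sum]
        gcongr
        exact sum_mul_exp_neg_sum_le_le_one_sub_exp s (fun i ↦ div_nonneg (hy i) zero_le_two) F
    _ ≤ 2 := by linarith [Real.exp_pos (-∑ i ∈ F, y i / 2)]

end Tournament

section Disk

open ComplexConjugate

variable {a z : ℂ}

theorem one_sub_mul_conj_ne_zero (ha : ‖a‖ < 1) (hz : ‖z‖ ≤ 1) : 1 - z * conj a ≠ 0 := fun h ↦ by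
  have : ‖z * conj a‖ < 1 := by
    rw [norm_mul, RCLike.norm_conj]
    exact mul_lt_one_of_nonneg_of_lt_one_right hz (norm_nonneg a) ha
  rw [← sub_eq_zero.1 h, norm_one] at this
  exact this.false

theorem norm_one_sub_mul_conj_pos (ha : ‖a‖ < 1) (hz : ‖z‖ < 1) : 0 < ‖1 - z * conj a‖ :=
  norm_pos_iff.2 (one_sub_mul_conj_ne_zero ha hz.le)

theorem one_sub_norm_sq_pos (ha : ‖a‖ < 1) : 0 < 1 - ‖a‖ ^ 2 :=
  sub_pos.2 (pow_lt_one₀ (norm_nonneg a) ha two_ne_zero)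

/-- The automorphism `z ↦ (z - a) / (1 - āz)` of the unit disk, taking `a` to `0`. -/
noncomputable def mobius (a z : ℂ) : ℂ := (z - a) / (1 - z * conj a)

theorem mobius_self (a : ℂ) : mobius a a = 0 := by simp [mobius]

theorem norm_mobius_comm (a z : ℂ) : ‖mobius a z‖ = ‖mobius z a‖ := by
  rw [mobius, mobius, norm_div, norm_div, norm_sub_rev, ← RCLike.norm_conj (1 - z * conj a)]
  simp [mul_comm]

theorem one_sub_norm_mobius_sq (ha : ‖a‖ < 1) (hz : ‖z‖ < 1) :
    1 - ‖mobius a z‖ ^ 2 = (1 - ‖a‖ ^ 2) * (1 - ‖z‖ ^ 2) / ‖1 - z * conj a‖ ^ 2 := by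
  have hden := (norm_one_sub_mul_conj_pos ha hz).ne'
  have hid : ‖1 - z * conj a‖ ^ 2 - ‖z - a‖ ^ 2 = (1 - ‖a‖ ^ 2) * (1 - ‖z‖ ^ 2) := by
    simp only [Complex.sq_norm, Complex.normSq_apply, Complex.sub_re, Complex.sub_im,
      Complex.mul_re, Complex.mul_im, Complex.conj_re, Complex.conj_im, Complex.one_re,
      Complex.one_im]
    ring
  rw [mobius, norm_div, div_pow, ← hid, sub_div, div_self (pow_ne_zero 2 hden)]

theorem norm_mobius_lt_one (ha : ‖a‖ < 1) (hz : ‖z‖ < 1) : ‖mobius a z‖ < 1 := by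
  have : 0 < 1 - ‖mobius a z‖ ^ 2 := by
    rw [one_sub_norm_mobius_sq ha hz]
    have := norm_one_sub_mul_conj_pos ha hz
    have := one_sub_norm_sq_pos ha
    have := one_sub_norm_sq_pos hz
    positivity
  exact (sq_lt_one_iff₀ (norm_nonneg _)).1 (by linarith)

theorem mobius_neg_mobius (ha : ‖a‖ < 1) (hz : ‖z‖ < 1) : mobius (-a) (mobius a z) = z := by
  have hden := one_sub_mul_conj_ne_zero ha hz.le
  have hdiag := one_sub_mul_conj_ne_zero ha ha.le
  have hnum : mobius a z - -a = z * (1 - a * conj a) / (1 - z * conj a) := by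
    rw [mobius, eq_div_iff hden, sub_mul, div_mul_cancel₀ _ hden]
    ring
  have hden' : 1 - mobius a z * conj (-a) = (1 - a * conj a) / (1 - z * conj a) := by
    rw [mobius, map_neg, eq_div_iff hden, sub_mul, mul_right_comm, div_mul_cancel₀ _ hden]
    ring
  rw [mobius, hnum, hden', div_div_div_cancel_right₀ hden, mul_div_cancel_right₀ _ hdiag]

theorem differentiableAt_mobius (ha : ‖a‖ < 1) (hz : ‖z‖ < 1) :
    DifferentiableAt ℂ (mobius a) z :=
  DifferentiableAt.div (by fun_prop) (by fun_prop) (one_sub_mul_conj_ne_zero ha hz.le)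

theorem one_sub_norm_sq_div_le_two (ha : ‖a‖ < 1) (hz : ‖z‖ < 1) :
    (1 - ‖a‖ ^ 2) / ‖1 - z * conj a‖ ≤ 2 := by
  rw [div_le_iff₀ (norm_one_sub_mul_conj_pos ha hz)]
  have : 1 - ‖z‖ * ‖a‖ ≤ ‖1 - z * conj a‖ := by
    simpa using norm_sub_norm_le 1 (z * conj a)
  nlinarith [norm_nonneg a]

/-- The zero-free function `exp (-(1 - |a|²) (1 + āz) / (1 - āz))`, at most one in modulus on the
disk and small where the normalized Szegő kernel `(1 - |a|²) / (1 - āz)` is large. -/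
noncomputable def damping (a z : ℂ) : ℂ :=
  Complex.exp (-((1 - ‖a‖ ^ 2 : ℝ) * ((1 + z * conj a) / (1 - z * conj a))))

theorem norm_damping (a z : ℂ) : ‖damping a z‖ =
    Real.exp (-((1 - ‖a‖ ^ 2) * (1 - ‖a‖ ^ 2 * ‖z‖ ^ 2) / ‖1 - z * conj a‖ ^ 2)) := by
  rw [damping, Complex.norm_exp, Complex.neg_re, Complex.re_ofReal_mul, mul_div_assoc]
  congr 3
  rw [Complex.div_re, ← add_div, Complex.sq_norm, Complex.sq_norm, Complex.sq_norm]
  congr 1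
  simp only [Complex.normSq_apply, Complex.sub_re, Complex.sub_im, Complex.mul_re, Complex.add_re,
    Complex.add_im, Complex.mul_im, Complex.conj_re, Complex.conj_im, Complex.one_re,
    Complex.one_im]
  ring

theorem norm_damping_le (ha : ‖a‖ < 1) (hz : ‖z‖ < 1) :
    ‖damping a z‖ ≤ Real.exp (-((1 - ‖a‖ ^ 2) / ‖1 - z * conj a‖) ^ 2) := by
  rw [norm_damping, div_pow, sq (1 - ‖a‖ ^ 2)]
  have := one_sub_norm_sq_pos ha
  have : ‖z‖ ^ 2 ≤ 1 := pow_le_one₀ (norm_nonneg z) hz.le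
  gcongr
  exact mul_le_of_le_one_right (sq_nonneg _) this

theorem exp_neg_two_le_norm_damping_self (ha : ‖a‖ < 1) : Real.exp (-2) ≤ ‖damping a a‖ := by
  have hpos := one_sub_norm_sq_pos ha
  have hden : ‖1 - a * conj a‖ = 1 - ‖a‖ ^ 2 := by
    rw [Complex.mul_conj', ← Complex.ofReal_pow, ← Complex.ofReal_one, ← Complex.ofReal_sub,
      Complex.norm_real, Real.norm_of_nonneg hpos.le]
  rw [norm_damping, hden, Real.exp_le_exp, neg_le_neg_iff, div_le_iff₀ (by positivity)]
  nlinarith [sq_nonneg ‖a‖]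

theorem norm_mobius_pow_four_le_norm_damping (ha : ‖a‖ < 1) (hza : ‖z‖ ≤ ‖a‖) :
    ‖mobius a z‖ ^ 4 ≤ ‖damping a z‖ := by
  have hz : ‖z‖ < 1 := hza.trans_lt ha
  have hsq : ‖z‖ ^ 2 ≤ ‖a‖ ^ 2 := by gcongr
  have hexponent : (1 - ‖a‖ ^ 2) * (1 - ‖a‖ ^ 2 * ‖z‖ ^ 2) / ‖1 - z * conj a‖ ^ 2 ≤
      2 * (1 - ‖mobius a z‖ ^ 2) := by
    rw [one_sub_norm_mobius_sq ha hz, ← mul_div_assoc, mul_left_comm 2]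
    have := (one_sub_norm_sq_pos ha).le
    gcongr
    nlinarith [sq_nonneg ‖z‖]
  calc ‖mobius a z‖ ^ 4 = (‖mobius a z‖ ^ 2) ^ 2 := by ring
    _ ≤ Real.exp (‖mobius a z‖ ^ 2 - 1) ^ 2 := by
        gcongr
        linarith [Real.add_one_le_exp (‖mobius a z‖ ^ 2 - 1)]
    _ = Real.exp (-(2 * (1 - ‖mobius a z‖ ^ 2))) := by
        rw [← Real.exp_nat_mul]
        congr 1
        push_cast
        ring
    _ ≤ ‖damping a z‖ := by
        rw [norm_damping]
        gcongr

theorem differentiableAt_damping (ha : ‖a‖ < 1) (hz : ‖z‖ < 1) :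
    DifferentiableAt ℂ (damping a) z := by
  have hden := one_sub_mul_conj_ne_zero ha hz.le
  unfold damping
  fun_prop (disch := exact hden)

end Disk

section Polydisk

open ComplexConjugate Metric

variable {d : ℕ} {a z w : Fin d → ℂ}

theorem differentiableAt_finsetProd {ι E : Type*} [NormedAddCommGroup E] [NormedSpace ℂ E]
    {F : Finset ι} {f : ι → E → ℂ} {x : E} (hf : ∀ i ∈ F, DifferentiableAt ℂ (f i) x) :
    DifferentiableAt ℂ (fun x ↦ ∏ i ∈ F, f i x) x := by
  classical
  exact (HasFDerivAt.finsetProd fun i hi ↦ (hf i hi).hasFDerivAt).differentiableAt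

theorem polydisk_eq_ball (d : ℕ) : Polydisk d = ball 0 1 := by
  ext z
  rw [mem_ball_zero_iff, pi_norm_lt_iff one_pos]
  rfl

theorem isOpen_polydisk (d : ℕ) : IsOpen (Polydisk d) := polydisk_eq_ball d ▸ isOpen_ball

theorem szegoKernel_self (a : Fin d → ℂ) :
    szegoKernel a a = ((∏ r, (1 - ‖a r‖ ^ 2)⁻¹ : ℝ) : ℂ) := by
  simp [szegoKernel, Complex.mul_conj']

theorem szegoKernel_self_re_pos (ha : a ∈ Polydisk d) : 0 < (szegoKernel a a).re := by
  rw [szegoKernel_self, Complex.ofReal_re]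
  exact prod_pos fun r _ ↦ inv_pos.2 (one_sub_norm_sq_pos (ha r))

theorem conj_szegoKernel (z w : Fin d → ℂ) : conj (szegoKernel z w) = szegoKernel w z := by
  simp [szegoKernel, mul_comm]

theorem differentiableAt_szegoKernel (ha : a ∈ Polydisk d) (hz : z ∈ closedBall 0 1) :
    DifferentiableAt ℂ (szegoKernel · a) z := by
  rw [mem_closedBall_zero_iff] at hz
  have hfactor : ∀ r ∈ univ,
      DifferentiableAt ℂ (fun z : Fin d → ℂ ↦ (1 - z r * conj (a r))⁻¹) z := fun r _ ↦ by
    have hden := one_sub_mul_conj_ne_zero (ha r) ((norm_le_pi_norm z r).trans hz)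
    fun_prop (disch := exact hden)
  exact differentiableAt_finsetProd hfactor

theorem norm_szegoKernel_div_self (ha : a ∈ Polydisk d) (z : Fin d → ℂ) :
    ‖szegoKernel z a / szegoKernel a a‖ =
      ∏ r, (1 - ‖a r‖ ^ 2) / ‖1 - z r * conj (a r)‖ := by
  have hpos : 0 ≤ ∏ r, (1 - ‖a r‖ ^ 2)⁻¹ :=
    prod_nonneg fun r _ ↦ (inv_pos.2 (one_sub_norm_sq_pos (ha r))).le
  rw [norm_div, szegoKernel_self, Complex.norm_real, Real.norm_of_nonneg hpos, szegoKernel,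
    norm_prod, ← prod_div_distrib]
  simp [div_eq_mul_inv, mul_comm]

/- The Schwarz lemma on the polydisk, after moving `w` to the origin coordinatewise. -/
theorem gleasonDist_le_norm_mobius (hz : z ∈ Polydisk d) (hw : w ∈ Polydisk d) :
    gleasonDist z w ≤ ‖fun r ↦ mobius (w r) (z r)‖ := by
  refine Real.sSup_le ?_ (norm_nonneg _)
  rintro _ ⟨φ, hφ, hφ1, hφw, rfl⟩
  have hw' (r : Fin d) : ‖-w r‖ < 1 := by simpa using hw r
  set ψ : (Fin d → ℂ) → Fin d → ℂ := fun v r ↦ mobius (-w r) (v r)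
  have hψ : Set.MapsTo ψ (ball 0 1) (Polydisk d) := fun v hv r ↦
    norm_mobius_lt_one (hw' r) ((polydisk_eq_ball d ▸ hv : v ∈ Polydisk d) r)
  have hψd : DifferentiableOn ℂ ψ (ball 0 1) := fun v hv ↦ by
    rw [← polydisk_eq_ball] at hv
    refine (differentiableAt_pi.2 fun r ↦ ?_).differentiableWithinAt
    exact (differentiableAt_mobius (hw' r) (hv r)).comp v (f := fun v : Fin d → ℂ ↦ v r)
      (by fun_prop)
  have hψ0 : ψ 0 = w := funext fun r ↦ by simp [ψ, mobius]
  have hψz : ψ (fun r ↦ mobius (w r) (z r)) = z :=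
    funext fun r ↦ mobius_neg_mobius (hw r) (hz r)
  have := Complex.norm_le_norm_of_mapsTo_ball (hφ.comp hψd hψ)
    (fun v hv ↦ mem_closedBall_zero_iff.2 (hφ1 _ (hψ hv))) (by simp [hψ0, hφw])
    (z := fun r ↦ mobius (w r) (z r))
    ((pi_norm_lt_iff one_pos).2 fun r ↦ norm_mobius_lt_one (hw r) (hz r))
  rwa [Function.comp_apply, hψz] at this

theorem gleasonDist_nonneg (z w : Fin d → ℂ) : 0 ≤ gleasonDist z w := by
  refine Real.sSup_nonneg ?_
  rintro _ ⟨φ, -, -, -, rfl⟩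
  exact norm_nonneg _

theorem norm_le_gleasonDist {φ : (Fin d → ℂ) → ℂ} (hφ : DifferentiableOn ℂ φ (Polydisk d))
    (hφ1 : ∀ v ∈ Polydisk d, ‖φ v‖ ≤ 1) (hφw : φ w = 0) (hz : z ∈ Polydisk d) :
    ‖φ z‖ ≤ gleasonDist z w := by
  refine le_csSup ⟨1, ?_⟩ ⟨φ, hφ, hφ1, hφw, rfl⟩
  rintro _ ⟨ψ, -, hψ1, -, rfl⟩
  exact hψ1 z hz

theorem exists_symm_coordinate_gleasonDist_le [NeZero d] {ι : Type*} {lam : ι → Fin d → ℂ}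
    (hlam : ∀ i, lam i ∈ Polydisk d) :
    ∃ q : ι → ι → Fin d, (∀ i k, q i k = q k i) ∧
      ∀ i k, gleasonDist (lam i) (lam k) ≤ ‖mobius (lam k (q i k)) (lam i (q i k))‖ := by
  choose r hr using fun f : Fin d → ℝ ↦ Finite.exists_max f
  refine ⟨fun i k ↦ r fun s ↦ ‖mobius (lam k s) (lam i s)‖, fun i k ↦ ?_, fun i k ↦ ?_⟩
  · simp only [norm_mobius_comm]
  · exact (gleasonDist_le_norm_mobius (hlam i) (hlam k)).trans
      ((pi_norm_le_iff_of_nonneg (norm_nonneg _)).2 (hr _))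

end Polydisk

section Interpolants

open ComplexConjugate Metric

variable {d : ℕ} {ι : Type*} {lam : ι → Fin d → ℂ} {q : ι → ι → Fin d} {F : Finset ι}
  {a z : Fin d → ℂ} {i : ι}

/-- The squared modulus of the normalized Szegő kernel at `a`, scaled to be at most one on the
polydisk. These are the weights to which the tournament inequality is applied. -/
noncomputable def szegoWeight (a z : Fin d → ℂ) : ℝ :=
  (‖szegoKernel z a / szegoKernel a a‖ / 2 ^ d) ^ 2

theorem szegoWeight_nonneg (a z : Fin d → ℂ) : 0 ≤ szegoWeight a z := sq_nonneg _

theorem szegoWeight_le (ha : a ∈ Polydisk d) (hz : z ∈ Polydisk d) (r : Fin d) :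
    szegoWeight a z ≤ ((1 - ‖a r‖ ^ 2) / ‖1 - z r * conj (a r)‖) ^ 2 := by
  set κ : Fin d → ℝ := fun s ↦ (1 - ‖a s‖ ^ 2) / ‖1 - z s * conj (a s)‖
  have hκ0 (s : Fin d) : 0 ≤ κ s := div_nonneg (one_sub_norm_sq_pos (ha s)).le (norm_nonneg _)
  have hκ2 (s : Fin d) : κ s / 2 ≤ 1 :=
    (div_le_one two_pos).2 (one_sub_norm_sq_div_le_two (ha s) (hz s))
  have hprod : ‖szegoKernel z a / szegoKernel a a‖ / 2 ^ d = ∏ s, κ s / 2 := by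
    rw [norm_szegoKernel_div_self ha]
    simp [prod_div_distrib, κ]
  rw [szegoWeight, hprod]
  refine pow_le_pow_left₀ (prod_nonneg fun s _ ↦ div_nonneg (hκ0 s) zero_le_two) ?_ 2
  calc ∏ s, κ s / 2 = κ r / 2 * ∏ s ∈ univ.erase r, κ s / 2 :=
        (mul_prod_erase _ _ (mem_univ r)).symm
    _ ≤ κ r / 2 * 1 := by
        have := hκ0 r
        gcongr
        exact prod_le_one (fun s _ ↦ div_nonneg (hκ0 s) zero_le_two) fun s _ ↦ hκ2 s
    _ ≤ κ r := by linarith [hκ0 r]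

section

variable [DecidableEq ι]

/-- The function attached to the node `lam i` in the explicit interpolation formula. The first
product kills the other nodes, the second makes the sum over `i` converge. The point `lam j` enters
only through its coordinate `q i j`, chosen later as one that realizes the Gleason distance. -/
noncomputable def interpolant (lam : ι → Fin d → ℂ) (q : ι → ι → Fin d) (F : Finset ι) (i : ι)
    (z : Fin d → ℂ) : ℂ :=
  (szegoKernel z (lam i) / szegoKernel (lam i) (lam i)) ^ 2 *
    (∏ j ∈ F.erase i, mobius (lam j (q i j)) (z (q i j))) *
    ∏ k ∈ F with ‖lam i (q i k)‖ ≤ ‖lam k (q i k)‖, damping (lam k (q i k)) (z (q i k))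

theorem differentiableOn_interpolant (hlam : ∀ i, lam i ∈ Polydisk d) :
    DifferentiableOn ℂ (interpolant lam q F i) (Polydisk d) := fun z hz ↦ by
  have hz' : z ∈ closedBall 0 1 := ball_subset_closedBall (polydisk_eq_ball d ▸ hz)
  have hkernel : DifferentiableAt ℂ
      (fun z ↦ (szegoKernel z (lam i) / szegoKernel (lam i) (lam i)) ^ 2) z := by
    simp only [div_eq_mul_inv]
    exact ((differentiableAt_szegoKernel (hlam i) hz').mul_const _).pow 2
  have hmobius : ∀ j ∈ F.erase i,
      DifferentiableAt ℂ (fun z : Fin d → ℂ ↦ mobius (lam j (q i j)) (z (q i j))) z := fun j _ ↦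
    (differentiableAt_mobius (hlam j _) (hz _)).comp z (f := fun z : Fin d → ℂ ↦ z (q i j))
      (by fun_prop)
  have hdamping : ∀ k ∈ F.filter fun k ↦ ‖lam i (q i k)‖ ≤ ‖lam k (q i k)‖,
      DifferentiableAt ℂ (fun z : Fin d → ℂ ↦ damping (lam k (q i k)) (z (q i k))) z := fun k _ ↦
    (differentiableAt_damping (hlam k _) (hz _)).comp z (f := fun z : Fin d → ℂ ↦ z (q i k))
      (by fun_prop)
  exact ((hkernel.mul (differentiableAt_finsetProd hmobius)).mul
    (differentiableAt_finsetProd hdamping)).differentiableWithinAt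

theorem norm_interpolant_le (hlam : ∀ i, lam i ∈ Polydisk d) (hz : z ∈ Polydisk d) :
    ‖interpolant lam q F i z‖ ≤ 4 ^ d * (szegoWeight (lam i) z *
      Real.exp (-∑ k ∈ F with ‖lam i (q i k)‖ ≤ ‖lam k (q i k)‖, szegoWeight (lam k) z)) := by
  have hkernel : ‖(szegoKernel z (lam i) / szegoKernel (lam i) (lam i)) ^ 2‖ =
      4 ^ d * szegoWeight (lam i) z := by
    rw [szegoWeight, norm_pow, div_pow, ← pow_mul, mul_comm d, pow_mul]
    field_simp
    norm_num
  have hmobius : ‖∏ j ∈ F.erase i, mobius (lam j (q i j)) (z (q i j))‖ ≤ 1 := by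
    rw [norm_prod]
    exact prod_le_one (fun _ _ ↦ norm_nonneg _) fun j _ ↦ (norm_mobius_lt_one (hlam j _) (hz _)).le
  have hdamping :
      ‖∏ k ∈ F with ‖lam i (q i k)‖ ≤ ‖lam k (q i k)‖, damping (lam k (q i k)) (z (q i k))‖ ≤
        Real.exp (-∑ k ∈ F with ‖lam i (q i k)‖ ≤ ‖lam k (q i k)‖, szegoWeight (lam k) z) := by
    rw [norm_prod, ← sum_neg_distrib, Real.exp_sum]
    refine prod_le_prod (fun _ _ ↦ norm_nonneg _) fun k _ ↦ ?_
    refine (norm_damping_le (hlam k _) (hz _)).trans (Real.exp_le_exp.2 (neg_le_neg ?_))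
    exact szegoWeight_le (hlam k) hz _
  have hweight := szegoWeight_nonneg (lam i) z
  rw [interpolant, norm_mul, norm_mul, hkernel]
  calc _ ≤ 4 ^ d * szegoWeight (lam i) z * 1 * Real.exp _ :=
        mul_le_mul (mul_le_mul_of_nonneg_left hmobius (by positivity)) hdamping
          (norm_nonneg _) (by positivity)
    _ = _ := by rw [mul_one, mul_assoc]

theorem interpolant_eq_zero {j : ι} (hj : j ∈ F) (hji : j ≠ i) :
    interpolant lam q F i (lam j) = 0 := by
  rw [interpolant, prod_eq_zero (mem_erase.2 ⟨hji, hj⟩) (mobius_self _), mul_zero, zero_mul]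

theorem le_norm_interpolant_self (hlam : ∀ i, lam i ∈ Polydisk d) {ε : ℝ} (hε : 0 ≤ ε)
    (hsep : ∀ G, i ∉ G → ε ≤ ∏ k ∈ G, ‖mobius (lam k (q i k)) (lam i (q i k))‖) (hi : i ∈ F) :
    ε ^ 5 * Real.exp (-2) ≤ ‖interpolant lam q F i (lam i)‖ := by
  have hmobius : ε ≤ ‖∏ j ∈ F.erase i, mobius (lam j (q i j)) (lam i (q i j))‖ := by
    rw [norm_prod]
    exact hsep _ (notMem_erase i F)
  set G := F.filter fun k ↦ ‖lam i (q i k)‖ ≤ ‖lam k (q i k)‖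
  have hdamping : Real.exp (-2) * ε ^ 4 ≤ ‖∏ k ∈ G, damping (lam k (q i k)) (lam i (q i k))‖ := by
    rw [norm_prod, ← mul_prod_erase G _ (mem_filter.2 ⟨hi, le_rfl⟩)]
    gcongr
    · exact exp_neg_two_le_norm_damping_self (hlam i _)
    calc ε ^ 4 ≤ (∏ k ∈ G.erase i, ‖mobius (lam k (q i k)) (lam i (q i k))‖) ^ 4 := by
          gcongr
          exact hsep _ (notMem_erase i G)
      _ = ∏ k ∈ G.erase i, ‖mobius (lam k (q i k)) (lam i (q i k))‖ ^ 4 := (prod_pow _ _ _).symm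
      _ ≤ ∏ k ∈ G.erase i, ‖damping (lam k (q i k)) (lam i (q i k))‖ :=
          prod_le_prod (fun _ _ ↦ by positivity) fun k hk ↦
            norm_mobius_pow_four_le_norm_damping (hlam k _) (mem_filter.1 (mem_of_mem_erase hk)).2
  have hkernel : szegoKernel (lam i) (lam i) ≠ 0 := fun h ↦ by
    simpa [h] using szegoKernel_self_re_pos (hlam i)
  rw [interpolant, div_self hkernel, one_pow, one_mul, norm_mul]
  calc ε ^ 5 * Real.exp (-2) = ε * (Real.exp (-2) * ε ^ 4) := by ring
    _ ≤ _ := by gcongr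

end

theorem exists_interpolation_finset (hlam : ∀ i, lam i ∈ Polydisk d) {ε C : ℝ} (hε : 0 < ε)
    (hsymm : ∀ i k, q i k = q k i)
    (hsep : ∀ i G, i ∉ G → ε ≤ ∏ k ∈ G, ‖mobius (lam k (q i k)) (lam i (q i k))‖)
    {w : ι → ℂ} (hC : 0 ≤ C) (hw : ∀ i, ‖w i‖ ≤ C) (F : Finset ι) :
    ∃ φ : (Fin d → ℂ) → ℂ, DifferentiableOn ℂ φ (Polydisk d) ∧
      (∀ z ∈ Polydisk d, ‖φ z‖ ≤ C / (ε ^ 5 * Real.exp (-2)) * (4 ^ d * 2)) ∧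
      ∀ i ∈ F, φ (lam i) = w i := by
  classical
  set g := interpolant lam q F
  set c := ε ^ 5 * Real.exp (-2)
  have hc : 0 < c := by positivity
  have hgc : ∀ i ∈ F, c ≤ ‖g i (lam i)‖ := fun i hi ↦
    le_norm_interpolant_self hlam hε.le (hsep i) hi
  have htotal (i k : ι) : ‖lam i (q i k)‖ ≤ ‖lam k (q i k)‖ ∨ ‖lam k (q k i)‖ ≤ ‖lam i (q k i)‖ :=
    hsymm i k ▸ le_total _ _
  refine ⟨fun z ↦ ∑ i ∈ F, w i / g i (lam i) * g i z,
    DifferentiableOn.fun_sum fun i _ ↦ (differentiableOn_interpolant hlam).const_mul _,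
    fun z hz ↦ ?_, fun j hj ↦ ?_⟩
  · calc ‖∑ i ∈ F, w i / g i (lam i) * g i z‖
        ≤ ∑ i ∈ F, ‖w i / g i (lam i) * g i z‖ := norm_sum_le _ _
      _ ≤ ∑ i ∈ F, C / c * (4 ^ d * (szegoWeight (lam i) z * Real.exp
            (-∑ k ∈ F with ‖lam i (q i k)‖ ≤ ‖lam k (q i k)‖, szegoWeight (lam k) z))) := by
          refine sum_le_sum fun i hi ↦ ?_
          rw [norm_mul, norm_div]
          gcongr
          · exact hw i
          · exact hgc i hi
          · exact norm_interpolant_le hlam hz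
      _ ≤ C / c * (4 ^ d * 2) := by
          rw [← mul_sum, ← mul_sum]
          gcongr
          exact sum_mul_exp_neg_sum_le_two (fun k ↦ szegoWeight_nonneg (lam k) z) htotal F
  · have hne : g j (lam j) ≠ 0 := norm_pos_iff.1 (hc.trans_le (hgc j hj))
    change ∑ i ∈ F, w i / g i (lam i) * g i (lam j) = w j
    rw [sum_eq_single_of_mem j hj fun i _ hij ↦ by
      rw [show g i (lam j) = 0 from interpolant_eq_zero hj hij.symm, mul_zero],
      div_mul_cancel₀ _ hne]

end Interpolants

section Notions

variable {d : ℕ} {ι : Type*}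

/-- Condition (1) of Berndtsson–Chang–Lin. The lower bound on the infinite product, whose factors
lie in `[0, 1]`, is expressed through its finite partial products. -/
def IsStronglySeparated (lam : ι → Fin d → ℂ) : Prop :=
  ∃ ε > (0 : ℝ), ∀ i, ∀ F : Finset ι, i ∉ F → ε ≤ ∏ j ∈ F, gleasonDist (lam i) (lam j)

/-- Every bounded family of values at the nodes `lam` is taken by a function in `H^∞` of the
polydisk. -/
def IsInterpolating (lam : ι → Fin d → ℂ) : Prop :=
  ∀ w : ι → ℂ, (∃ Cw : ℝ, ∀ i, ‖w i‖ ≤ Cw) →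
    ∃ φ : (Fin d → ℂ) → ℂ, DifferentiableOn ℂ φ (Polydisk d) ∧
      (∃ Cφ : ℝ, ∀ z ∈ Polydisk d, ‖φ z‖ ≤ Cφ) ∧ ∀ i, φ (lam i) = w i

/-- The constant of interpolation of the nodes `lam` is at most `M`. -/
def IsInterpolatingWith (lam : ι → Fin d → ℂ) (M : ℝ) : Prop :=
  ∀ w : ι → ℂ, (∀ i, ‖w i‖ ≤ 1) →
    ∃ φ : (Fin d → ℂ) → ℂ, DifferentiableOn ℂ φ (Polydisk d) ∧
      (∀ z ∈ Polydisk d, ‖φ z‖ ≤ M) ∧ ∀ i, φ (lam i) = w i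

/-- The Gleason distances between distinct nodes are bounded below. -/
def IsWeaklySeparated (lam : ι → Fin d → ℂ) : Prop :=
  ∃ ε > (0 : ℝ), ∀ i j, i ≠ j → ε ≤ gleasonDist (lam i) (lam j)

/-- The Grammian of the normalized Szegő kernels at the nodes `lam` is bounded on `ℓ²`. -/
def HasBoundedSzegoGrammian (lam : ι → Fin d → ℂ) : Prop :=
  ∃ M > (0 : ℝ), ∀ (F : Finset ι) (a : ι → ℂ),
    ‖∑ i ∈ F, ∑ j ∈ F, a i * starRingEnd ℂ (a j) *
        (szegoKernel (lam i) (lam j) /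
          (Real.sqrt ((szegoKernel (lam i) (lam i)).re *
            (szegoKernel (lam j) (lam j)).re) : ℂ))‖ ≤ M * ∑ i ∈ F, ‖a i‖ ^ 2

theorem IsStronglySeparated.isInterpolating [NeZero d] {lam : ι → Fin d → ℂ}
    (h : IsStronglySeparated lam) (hlam : ∀ i, lam i ∈ Polydisk d) : IsInterpolating lam := by
  obtain ⟨ε, hε, hsep⟩ := h
  obtain ⟨q, hsymm, hq⟩ := exists_symm_coordinate_gleasonDist_le hlam
  have hmobius (i : ι) (G : Finset ι) (hi : i ∉ G) :
      ε ≤ ∏ k ∈ G, ‖mobius (lam k (q i k)) (lam i (q i k))‖ :=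
    (hsep i G hi).trans (prod_le_prod (fun _ _ ↦ gleasonDist_nonneg _ _) fun k _ ↦ hq i k)
  rintro w ⟨C, hC⟩
  obtain ⟨φ, hφ, hφC, hφw⟩ := exists_interpolation_of_forall_finset (isOpen_polydisk d) hlam
    (exists_interpolation_finset hlam hε hsymm hmobius (abs_nonneg C)
      fun i ↦ (hC i).trans (le_abs_self C))
  exact ⟨φ, hφ, ⟨_, hφC⟩, hφw⟩

theorem IsInterpolating.exists_isInterpolatingWith {lam : ι → Fin d → ℂ} (h : IsInterpolating lam)
    (hlam : ∀ i, lam i ∈ Polydisk d) : ∃ M > 0, IsInterpolatingWith lam M :=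
  exists_uniform_interpolation_bound (isOpen_polydisk d) hlam h

theorem IsInterpolatingWith.isWeaklySeparated {lam : ι → Fin d → ℂ} {M : ℝ}
    (h : IsInterpolatingWith lam M) (hM : 0 < M) (hlam : ∀ i, lam i ∈ Polydisk d) :
    IsWeaklySeparated lam := by
  classical
  refine ⟨1 / M, one_div_pos.2 hM, fun i j hij ↦ ?_⟩
  obtain ⟨φ, hφ, hφM, hφw⟩ := h (Pi.single i 1) fun k ↦ by
    by_cases hk : k = i <;> simp [hk]
  have hnorm (z : Fin d → ℂ) : ‖(M : ℂ)⁻¹ * φ z‖ = ‖φ z‖ / M := by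
    rw [norm_mul, norm_inv, Complex.norm_of_nonneg hM.le, inv_mul_eq_div]
  have := norm_le_gleasonDist (hφ.const_mul (M : ℂ)⁻¹)
    (fun z hz ↦ (hnorm z).trans_le ((div_le_one hM).2 (hφM z hz)))
    (w := lam j) (by simp [hφw, hij.symm]) (hlam i)
  rwa [hnorm, hφw, Pi.single_eq_same, norm_one] at this

end Notions

section CauchyFormula

open Metric

variable {n : ℕ} {E : Type*} [NormedAddCommGroup E]

theorem continuous_torusMap (c : Fin n → ℂ) (R : Fin n → ℝ) : Continuous (torusMap c R) := by
  unfold torusMap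
  fun_prop

theorem torusIntegrable_of_continuousOn {f : (Fin n → ℂ) → E} {c : Fin n → ℂ} {R : Fin n → ℝ}
    (hf : ContinuousOn f (Set.univ.pi fun i ↦ sphere (c i) |R i|)) : TorusIntegrable f c R := by
  refine (hf.comp_continuous (continuous_torusMap c R) fun θ i _ ↦ ?_).continuousOn
    |>.integrableOn_compact isCompact_Icc
  exact circleMap_mem_sphere' (c i) (R i) (θ i)

theorem torusIntegral_prod_sub_inv_smul [NormedSpace ℂ E] [CompleteSpace E] {f : (Fin n → ℂ) → E}
    {c w : Fin n → ℂ} {R : Fin n → ℝ}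
    (hf : DifferentiableOn ℂ f (Set.univ.pi fun i ↦ closedBall (c i) (R i)))
    (hw : ∀ i, w i ∈ ball (c i) (R i)) :
    (∯ z in T(c, R), (∏ i, (z i - w i)⁻¹) • f z) = (2 * Real.pi * Complex.I) ^ n • f w := by
  induction n with
  | zero => simp [torusIntegral_dim0, Subsingleton.elim c w]
  | succ n ih =>
    have hR (i : Fin (n + 1)) : 0 < R i := dist_nonneg.trans_lt (hw i)
    have hcons {x : ℂ} (hx : x ∈ closedBall (c 0) (R 0)) {y : Fin n → ℂ}
        (hy : y ∈ Set.univ.pi fun i ↦ closedBall (c i.succ) (R i.succ)) :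
        (Fin.cons x y : Fin (n + 1) → ℂ) ∈ Set.univ.pi fun i ↦ closedBall (c i) (R i) :=
      fun i _ ↦ Fin.cases (by simpa using hx) (fun i ↦ by simpa using hy i trivial) i
    have hinner : ∀ x ∈ sphere (c 0) (R 0),
        (∯ y in T(c ∘ Fin.succ, R ∘ Fin.succ),
          (∏ i, ((Fin.cons x y : Fin (n + 1) → ℂ) i - w i)⁻¹) • f (Fin.cons x y)) =
        (x - w 0)⁻¹ • (2 * Real.pi * Complex.I) ^ n • f (Fin.cons x (Fin.tail w)) := fun x hx ↦ by
      have hslice : DifferentiableOn ℂ (fun y : Fin n → ℂ ↦ f (Fin.cons x y))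
          (Set.univ.pi fun i ↦ closedBall (c i.succ) (R i.succ)) :=
        hf.comp (DifferentiableOn.finCons (by fun_prop) (by fun_prop)) fun y hy ↦
          hcons (sphere_subset_closedBall hx) hy
      rw [← ih (c := c ∘ Fin.succ) (R := R ∘ Fin.succ) (w := Fin.tail w) hslice fun i ↦ hw i.succ,
        ← torusIntegral_smul]
      simp only [Fin.prod_univ_succ, Fin.cons_zero, Fin.cons_succ, mul_smul, Fin.tail]
    have houter : DifferentiableOn ℂ
        (fun x ↦ (2 * Real.pi * Complex.I) ^ n • f (Fin.cons x (Fin.tail w)))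
        (closedBall (c 0) (R 0)) :=
      (hf.comp (DifferentiableOn.finCons (by fun_prop) (by fun_prop)) fun x hx ↦
        hcons hx fun i _ ↦ ball_subset_closedBall (hw i.succ)).const_smul _
    rw [torusIntegral_succ, circleIntegral.integral_congr (hR 0).le hinner,
      houter.circleIntegral_sub_inv_smul (hw 0), Fin.cons_self_tail, smul_smul,
      pow_succ']
    refine torusIntegrable_of_continuousOn (ContinuousOn.smul ?_ (hf.continuousOn.mono ?_))
    · refine continuousOn_finsetProd _ fun i _ ↦ ContinuousOn.inv₀ (by fun_prop) fun z hz h ↦ ?_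
      have hzi : w i ∈ sphere (c i) (R i) := by
        simpa [sub_eq_zero.1 h, abs_of_pos (hR i)] using hz i trivial
      exact (mem_sphere.1 hzi).not_lt (mem_ball.1 (hw i))
    · exact Set.pi_mono fun i _ ↦ by
        simpa only [abs_of_pos (hR i)] using sphere_subset_closedBall

end CauchyFormula

section HardySpace

open ComplexConjugate MeasureTheory Metric
open scoped InnerProductSpace ProbabilityTheory

variable {d : ℕ} {a : Fin d → ℂ}

theorem norm_torusMap_zero_one_apply (θ : Fin d → ℝ) (r : Fin d) : ‖torusMap 0 1 θ r‖ = 1 := by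
  simp [torusMap, Complex.norm_exp_ofReal_mul_I]

theorem torusMap_zero_one_mem_closedBall (θ : Fin d → ℝ) : torusMap 0 1 θ ∈ closedBall 0 1 :=
  mem_closedBall_zero_iff.2 ((pi_norm_le_iff_of_nonneg zero_le_one).2 fun r ↦
    (norm_torusMap_zero_one_apply θ r).le)

/-- The normalized Haar measure of the torus, as the uniform measure on the cube of angles. -/
noncomputable def angleMeasure (d : ℕ) : Measure (Fin d → ℝ) :=
  volume[|Set.Icc 0 fun _ ↦ 2 * Real.pi]

theorem measureReal_angle_cube (d : ℕ) :
    volume.real (Set.Icc (0 : Fin d → ℝ) fun _ ↦ 2 * Real.pi) = (2 * Real.pi) ^ d := by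
  rw [Measure.real, Real.volume_Icc_pi_toReal (a := 0) fun _ ↦ Real.two_pi_pos.le]
  simp

instance isProbabilityMeasure_angleMeasure : IsProbabilityMeasure (angleMeasure d) := by
  have hpos : volume (Set.Icc (0 : Fin d → ℝ) fun _ ↦ 2 * Real.pi) ≠ 0 := fun h ↦ by
    have := measureReal_angle_cube d
    rw [Measure.real, h, ENNReal.toReal_zero] at this
    exact (pow_pos Real.two_pi_pos d).ne this
  exact ProbabilityTheory.cond_isProbabilityMeasure_of_finite hpos measure_Icc_lt_top.ne

theorem I_pow_mul_conj_szegoKernel_torusMap (a : Fin d → ℂ) (θ : Fin d → ℝ) :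
    Complex.I ^ d * conj (szegoKernel (torusMap 0 1 θ) a) =
      (∏ r, Complex.exp (θ r * Complex.I) * Complex.I) * ∏ r, (torusMap 0 1 θ r - a r)⁻¹ := by
  have hfactor (r : Fin d) :
      Complex.exp (θ r * Complex.I) * Complex.I * (torusMap 0 1 θ r - a r)⁻¹ =
        Complex.I * (1 - a r * conj (torusMap 0 1 θ r))⁻¹ := by
    have hz : torusMap 0 1 θ r = Complex.exp (θ r * Complex.I) := by simp [torusMap]
    have hunit : torusMap 0 1 θ r * conj (torusMap 0 1 θ r) = 1 := by
      rw [Complex.mul_conj', norm_torusMap_zero_one_apply]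
      norm_num
    rw [← hz, show torusMap 0 1 θ r - a r =
      torusMap 0 1 θ r * (1 - a r * conj (torusMap 0 1 θ r)) by linear_combination a r * hunit]
    have : torusMap 0 1 θ r ≠ 0 := left_ne_zero_of_mul_eq_one hunit
    field_simp
  rw [conj_szegoKernel, ← prod_mul_distrib, prod_congr rfl fun r _ ↦ hfactor r, prod_mul_distrib]
  simp [szegoKernel]

theorem integral_conj_szegoKernel_mul (ha : a ∈ Polydisk d) {f : (Fin d → ℂ) → ℂ}
    (hf : DifferentiableOn ℂ f (closedBall 0 1)) :
    ∫ θ, conj (szegoKernel (torusMap 0 1 θ) a) * f (torusMap 0 1 θ) ∂angleMeasure d = f a := by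
  have hcauchy := torusIntegral_prod_sub_inv_smul (f := f) (c := 0) (w := a) (R := 1)
    (by rwa [closedBall_pi _ zero_le_one] at hf) fun r ↦ by simpa using ha r
  have hI : (Complex.I : ℂ) ^ d ≠ 0 := pow_ne_zero d Complex.I_ne_zero
  have hpi : (2 * Real.pi : ℂ) ^ d ≠ 0 := by exact_mod_cast (pow_pos Real.two_pi_pos d).ne'
  have hset : ∫ θ in Set.Icc 0 fun _ ↦ 2 * Real.pi,
      conj (szegoKernel (torusMap 0 1 θ) a) * f (torusMap 0 1 θ) = (2 * Real.pi) ^ d * f a := by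
    refine mul_left_cancel₀ hI ?_
    rw [← integral_const_mul, ← mul_assoc, ← mul_pow, mul_comm Complex.I]
    simpa [torusIntegral, ← mul_assoc, I_pow_mul_conj_szegoKernel_torusMap] using hcauchy
  rw [angleMeasure, ProbabilityTheory.cond, integral_smul_measure, ENNReal.toReal_inv,
    ← Measure.real, measureReal_angle_cube, hset, Complex.real_smul]
  push_cast
  rw [inv_mul_cancel_left₀ hpi]

/-- The algebra of functions holomorphic up to the boundary of the polydisk: a dense subalgebra of
`H²` whose elements have pointwise boundary values on the torus. -/
def holomorphicOnClosedPolydisk (d : ℕ) : Subalgebra ℂ ((Fin d → ℂ) → ℂ) where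
  carrier := {f | DifferentiableOn ℂ f (closedBall 0 1)}
  mul_mem' := DifferentiableOn.mul
  add_mem' := DifferentiableOn.add
  algebraMap_mem' c := differentiableOn_const c

theorem memLp_comp_torusMap (f : holomorphicOnClosedPolydisk d) :
    MemLp (fun θ ↦ (f : (Fin d → ℂ) → ℂ) (torusMap 0 1 θ)) 2 (angleMeasure d) := by
  have hf : ContinuousOn (f : (Fin d → ℂ) → ℂ) (closedBall 0 1) := f.2.continuousOn
  obtain ⟨C, hC⟩ := (isCompact_closedBall _ _).exists_bound_of_continuousOn hf
  have hcont := hf.comp_continuous (continuous_torusMap 0 1) torusMap_zero_one_mem_closedBall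
  exact MemLp.of_bound hcont.aestronglyMeasurable C
    (.of_forall fun θ ↦ hC _ (torusMap_zero_one_mem_closedBall θ))

/-- The embedding of a holomorphic function into `L²` of the torus through its boundary values. Its
range is dense in the Hardy space `H²` of the polydisk. -/
noncomputable def boundaryValue (d : ℕ) :
    holomorphicOnClosedPolydisk d →ₗ[ℂ] Lp ℂ 2 (angleMeasure d) where
  toFun f := (memLp_comp_torusMap f).toLp
  map_add' _ _ := MemLp.toLp_add _ _
  map_smul' _ _ := MemLp.toLp_const_smul _ _

/-- The Szegő kernel function at `a`, which reproduces the value at `a` in `H²`. -/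
noncomputable def szegoFunction (a : Polydisk d) : holomorphicOnClosedPolydisk d :=
  ⟨(szegoKernel · a), fun _ hz ↦ (differentiableAt_szegoKernel a.2 hz).differentiableWithinAt⟩

theorem inner_boundaryValue_szegoFunction (a : Polydisk d) (f : holomorphicOnClosedPolydisk d) :
    ⟪boundaryValue d (szegoFunction a), boundaryValue d f⟫_ℂ = (f : (Fin d → ℂ) → ℂ) a := by
  rw [L2.inner_def, ← integral_conj_szegoKernel_mul a.2 f.2]
  refine integral_congr_ae ?_
  filter_upwards [(memLp_comp_torusMap (szegoFunction a)).coeFn_toLp,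
    (memLp_comp_torusMap f).coeFn_toLp] with θ ha hf
  change ⟪(memLp_comp_torusMap (szegoFunction a)).toLp _ θ,
    (memLp_comp_torusMap f).toLp _ θ⟫_ℂ = _
  rw [ha, hf, RCLike.inner_apply']
  rfl

theorem norm_boundaryValue_mul_le {φ : holomorphicOnClosedPolydisk d} {M : ℝ}
    (hφ : ∀ z ∈ closedBall 0 1, ‖(φ : (Fin d → ℂ) → ℂ) z‖ ≤ M)
    (f : holomorphicOnClosedPolydisk d) :
    ‖boundaryValue d (φ * f)‖ ≤ M * ‖boundaryValue d f‖ := by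
  refine Lp.norm_le_mul_norm_of_ae_le_mul ?_
  filter_upwards [(memLp_comp_torusMap (φ * f)).coeFn_toLp,
    (memLp_comp_torusMap f).coeFn_toLp] with θ hφf hf
  change ‖(memLp_comp_torusMap (φ * f)).toLp _ θ‖ ≤ M * ‖(memLp_comp_torusMap f).toLp _ θ‖
  rw [hφf, hf, MulMemClass.coe_mul, Pi.mul_apply, norm_mul]
  gcongr
  exact hφ _ (torusMap_zero_one_mem_closedBall θ)

end HardySpace

section Grammian

open ComplexConjugate Filter Metric
open scoped InnerProductSpace Topology

/- Two opposite signs average to the sum of the squares by the parallelogram law, so one of them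
does not exceed it. -/
theorem exists_sign_norm_sum_smul_sq_le (𝕜 : Type*) [RCLike 𝕜] {ι E : Type*}
    [NormedAddCommGroup E] [InnerProductSpace 𝕜 E] (F : Finset ι) (v : ι → E) :
    ∃ σ : ι → 𝕜, (∀ i, σ i = 1 ∨ σ i = -1) ∧ ‖∑ i ∈ F, σ i • v i‖ ^ 2 ≤ ∑ i ∈ F, ‖v i‖ ^ 2 := by
  classical
  induction F using Finset.induction with
  | empty => exact ⟨1, fun _ ↦ .inl rfl, by simp⟩
  | insert i F hi ih =>
    obtain ⟨σ, hσ, hle⟩ := ih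
    obtain ⟨s, hs, hsle⟩ : ∃ s : 𝕜, (s = 1 ∨ s = -1) ∧
        ‖s • v i + ∑ j ∈ F, σ j • v j‖ ^ 2 ≤ ‖v i‖ ^ 2 + ‖∑ j ∈ F, σ j • v j‖ ^ 2 := by
      have hpar := parallelogram_law_with_norm 𝕜 (∑ j ∈ F, σ j • v j) (v i)
      rcases le_total (‖∑ j ∈ F, σ j • v j + v i‖ ^ 2) (‖∑ j ∈ F, σ j • v j - v i‖ ^ 2) with h | h
      · refine ⟨1, .inl rfl, ?_⟩
        rw [one_smul, add_comm]
        linarith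
      · refine ⟨-1, .inr rfl, ?_⟩
        rw [neg_one_smul, neg_add_eq_sub]
        linarith
    refine ⟨Function.update σ i s, fun j ↦ ?_, ?_⟩
    · rcases eq_or_ne j i with rfl | hj
      · simpa using hs
      · simpa [hj] using hσ j
    · have hF : ∑ j ∈ F, Function.update σ i s j • v j = ∑ j ∈ F, σ j • v j :=
        sum_congr rfl fun j hj ↦ by rw [Function.update_of_ne (ne_of_mem_of_not_mem hj hi)]
      rw [sum_insert hi, sum_insert hi, hF, Function.update_self]
      linarith

variable {d : ℕ} {ι : Type*} {M : ℝ}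

/-- The Szegő kernel function at `a` as a vector of the Hilbert space `L²` of the torus. -/
noncomputable def szegoVector (a : Polydisk d) : MeasureTheory.Lp ℂ 2 (angleMeasure d) :=
  boundaryValue d (szegoFunction a)

theorem inner_szegoVector (a b : Polydisk d) :
    ⟪szegoVector a, szegoVector b⟫_ℂ = szegoKernel (a : Fin d → ℂ) b :=
  inner_boundaryValue_szegoFunction a (szegoFunction b)

theorem norm_szegoVector_sq (a : Polydisk d) :
    ‖szegoVector a‖ ^ 2 = (szegoKernel (a : Fin d → ℂ) a).re := by
  rw [← inner_self_eq_norm_sq (𝕜 := ℂ), inner_szegoVector]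
  rfl

theorem inner_sum_smul_szegoVector (p : ι → Polydisk d) (F : Finset ι) (c : ι → ℂ)
    (f : holomorphicOnClosedPolydisk d) :
    ⟪∑ i ∈ F, c i • szegoVector (p i), boundaryValue d f⟫_ℂ =
      ∑ i ∈ F, conj (c i) * (f : (Fin d → ℂ) → ℂ) (p i) := by
  simp only [sum_inner, inner_smul_left, szegoVector, inner_boundaryValue_szegoFunction]

/- Multiplication by `φ` is bounded by `M` on `H²`, and its adjoint maps the Szegő kernel at `p i`
to `conj (φ (p i))` times itself. -/
theorem norm_sum_conj_smul_szegoVector_le_of_closedBall {φ : holomorphicOnClosedPolydisk d}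
    (hφ : ∀ z ∈ closedBall 0 1, ‖(φ : (Fin d → ℂ) → ℂ) z‖ ≤ M) (p : ι → Polydisk d)
    (F : Finset ι) (c : ι → ℂ) :
    ‖∑ i ∈ F, (c i * conj ((φ : (Fin d → ℂ) → ℂ) (p i))) • szegoVector (p i)‖ ≤
      M * ‖∑ i ∈ F, c i • szegoVector (p i)‖ := by
  set v := ∑ i ∈ F, c i • szegoVector (p i)
  set g := ∑ i ∈ F, (c i * conj ((φ : (Fin d → ℂ) → ℂ) (p i))) • szegoFunction (p i)
  have hg : ∑ i ∈ F, (c i * conj ((φ : (Fin d → ℂ) → ℂ) (p i))) • szegoVector (p i) =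
      boundaryValue d g := by simp only [g, szegoVector, map_sum, map_smul]
  have hadjoint : ⟪boundaryValue d g, boundaryValue d g⟫_ℂ = ⟪v, boundaryValue d (φ * g)⟫_ℂ := by
    nth_rewrite 1 [← hg]
    simp only [v, inner_sum_smul_szegoVector, map_mul, Complex.conj_conj, MulMemClass.coe_mul,
      Pi.mul_apply, mul_assoc]
  have hsq : ‖boundaryValue d g‖ * ‖boundaryValue d g‖ ≤ M * ‖v‖ * ‖boundaryValue d g‖ :=
    calc ‖boundaryValue d g‖ * ‖boundaryValue d g‖
        = ‖⟪v, boundaryValue d (φ * g)⟫_ℂ‖ := by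
          rw [← hadjoint, ← inner_self_re_eq_norm, inner_self_eq_norm_mul_norm]
      _ ≤ ‖v‖ * ‖boundaryValue d (φ * g)‖ := norm_inner_le_norm _ _
      _ ≤ ‖v‖ * (M * ‖boundaryValue d g‖) := by
          gcongr
          exact norm_boundaryValue_mul_le hφ g
      _ = M * ‖v‖ * ‖boundaryValue d g‖ := by ring
  rw [hg]
  rcases (norm_nonneg (boundaryValue d g)).eq_or_lt with h0 | hpos
  · rw [← h0]
    exact mul_nonneg ((norm_nonneg _).trans (hφ 0 (by simp))) (norm_nonneg _)
  · exact le_of_mul_le_mul_right hsq hpos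

theorem norm_sum_conj_smul_szegoVector_le {φ : (Fin d → ℂ) → ℂ}
    (hφ : DifferentiableOn ℂ φ (Polydisk d)) (hM : ∀ z ∈ Polydisk d, ‖φ z‖ ≤ M)
    (p : ι → Polydisk d) (F : Finset ι) (c : ι → ℂ) :
    ‖∑ i ∈ F, (c i * conj (φ (p i))) • szegoVector (p i)‖ ≤
      M * ‖∑ i ∈ F, c i • szegoVector (p i)‖ := by
  have hdilate {t : ℝ} (ht : t ∈ Set.Ioo 0 1) {z : Fin d → ℂ} (hz : z ∈ closedBall 0 1) :
      (t : ℂ) • z ∈ Polydisk d := by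
    rw [polydisk_eq_ball, mem_ball_zero_iff, norm_smul, Complex.norm_of_nonneg ht.1.le]
    exact (mul_le_of_le_one_right ht.1.le (mem_closedBall_zero_iff.1 hz)).trans_lt ht.2
  have hbound : ∀ᶠ t : ℝ in 𝓝[<] 1, ‖∑ i ∈ F,
      (c i * conj (φ ((t : ℂ) • (p i : Fin d → ℂ)))) • szegoVector (p i)‖ ≤
        M * ‖∑ i ∈ F, c i • szegoVector (p i)‖ := by
    filter_upwards [Ioo_mem_nhdsLT one_pos] with t ht
    exact norm_sum_conj_smul_szegoVector_le_of_closedBall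
      (φ := ⟨fun z ↦ φ ((t : ℂ) • z), hφ.comp (by fun_prop) fun z hz ↦ hdilate ht hz⟩)
      (fun z hz ↦ hM _ (hdilate ht hz)) p F c
  have hlim (i : ι) : Tendsto (fun t : ℝ ↦ φ ((t : ℂ) • (p i : Fin d → ℂ))) (𝓝[<] 1)
      (𝓝 (φ (p i))) := by
    have hφi : ContinuousAt φ (p i) :=
      (hφ.differentiableAt ((isOpen_polydisk d).mem_nhds (p i).2)).continuousAt
    have hdil : Continuous fun t : ℝ ↦ (t : ℂ) • (p i : Fin d → ℂ) := by fun_prop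
    exact hφi.tendsto.comp ((by simpa using hdil.tendsto 1 : Tendsto _ _ _).mono_left
      nhdsWithin_le_nhds)
  refine le_of_tendsto (Tendsto.norm (tendsto_finsetSum F fun i _ ↦ ?_)) hbound
  exact (((Complex.continuous_conj.tendsto _).comp (hlim i)).const_mul _).smul_const _

theorem IsInterpolatingWith.norm_sum_smul_szegoVector_sq_le {p : ι → Polydisk d}
    (h : IsInterpolatingWith (fun i ↦ (p i : Fin d → ℂ)) M) (F : Finset ι) (c : ι → ℂ) :
    ‖∑ i ∈ F, c i • szegoVector (p i)‖ ^ 2 ≤ M ^ 2 * ∑ i ∈ F, ‖c i • szegoVector (p i)‖ ^ 2 := by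
  obtain ⟨σ, hσ, hσle⟩ := exists_sign_norm_sum_smul_sq_le ℂ F fun i ↦ c i • szegoVector (p i)
  obtain ⟨φ, hφ, hφM, hφσ⟩ := h σ fun i ↦ by rcases hσ i with h | h <;> simp [h]
  have hmul := norm_sum_conj_smul_szegoVector_le hφ hφM p F fun i ↦ σ i * c i
  have hcancel (i : ι) : σ i * c i * conj (φ (p i)) = c i := by
    rcases hσ i with h | h <;> simp [hφσ, h]
  simp only [hcancel, mul_smul] at hmul
  calc ‖∑ i ∈ F, c i • szegoVector (p i)‖ ^ 2
      ≤ (M * ‖∑ i ∈ F, σ i • c i • szegoVector (p i)‖) ^ 2 := by gcongr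
    _ ≤ M ^ 2 * ∑ i ∈ F, ‖c i • szegoVector (p i)‖ ^ 2 := by
        rw [mul_pow]
        gcongr

theorem IsInterpolatingWith.hasBoundedSzegoGrammian {lam : ι → Fin d → ℂ}
    (h : IsInterpolatingWith lam M) (hM : 0 < M) (hlam : ∀ i, lam i ∈ Polydisk d) :
    HasBoundedSzegoGrammian lam := by
  refine ⟨M ^ 2, pow_pos hM 2, fun F a ↦ ?_⟩
  set p : ι → Polydisk d := fun i ↦ ⟨lam i, hlam i⟩
  set κ : ι → ℝ := fun i ↦ (szegoKernel (lam i) (lam i)).re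
  have hκ (i : ι) : 0 < κ i := szegoKernel_self_re_pos (hlam i)
  set c : ι → ℂ := fun i ↦ conj (a i) / (Real.sqrt (κ i) : ℂ)
  have hnorm (i : ι) : ‖c i • szegoVector (p i)‖ ^ 2 = ‖a i‖ ^ 2 := by
    have hvec : ‖szegoVector (p i)‖ ^ 2 = κ i := norm_szegoVector_sq (p i)
    rw [norm_smul, mul_pow, hvec, norm_div, RCLike.norm_conj,
      Complex.norm_of_nonneg (Real.sqrt_nonneg _), div_pow, Real.sq_sqrt (hκ i).le,
      div_mul_cancel₀ _ (hκ i).ne']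
  have hgram : ∑ i ∈ F, ∑ j ∈ F, a i * conj (a j) *
      (szegoKernel (lam i) (lam j) / (Real.sqrt (κ i * κ j) : ℂ)) =
        (‖∑ i ∈ F, c i • szegoVector (p i)‖ ^ 2 : ℝ) := by
    have hinner (v : MeasureTheory.Lp ℂ 2 (angleMeasure d)) :
        ((‖v‖ ^ 2 : ℝ) : ℂ) = ⟪v, v⟫_ℂ := by
      rw [inner_self_eq_norm_sq_to_K, Complex.ofReal_pow]
      rfl
    rw [hinner, sum_inner]
    refine sum_congr rfl fun i _ ↦ ?_
    rw [inner_sum]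
    refine sum_congr rfl fun j _ ↦ ?_
    rw [inner_smul_left, inner_smul_right, inner_szegoVector, Real.sqrt_mul (hκ i).le]
    simp only [c, p, map_div₀, Complex.conj_conj, Complex.conj_ofReal]
    push_cast
    ring
  rw [hgram, Complex.norm_of_nonneg (sq_nonneg _)]
  simpa only [hnorm] using h.norm_sum_smul_szegoVector_sq_le (p := p) F c

end Grammian

theorem berndtsson_chang_lin_general {ι : Type*} {d : ℕ} [NeZero d] {lam : ι → Fin d → ℂ}
    (hlam : ∀ i, lam i ∈ Polydisk d) :
    (IsStronglySeparated lam → IsInterpolating lam) ∧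
      (IsInterpolating lam → IsWeaklySeparated lam ∧ HasBoundedSzegoGrammian lam) := by
  refine ⟨fun h ↦ h.isInterpolating hlam, fun h ↦ ?_⟩
  obtain ⟨M, hM, hinterp⟩ := h.exists_isInterpolatingWith hlam
  exact ⟨hinterp.isWeaklySeparated hM hlam, hinterp.hasBoundedSzegoGrammian hM hlam⟩

/-- **Berndtsson–Chang–Lin.** For a sequence of distinct points in `𝔻^d` (`d ≥ 2`):
(1) a uniform lower bound `ε` on the products `∏_{j≠i} ρ(λᵢ,λⱼ)` of Gleason distances
implies (2) the sequence is interpolating for `H^∞(𝔻^d)`, which in turn implies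
(3) weak separation together with boundedness of the Szegő Grammian on `ℓ²`. -/
theorem berndtsson_chang_lin {d : ℕ} (hd : 2 ≤ d) (lam : ℕ → Fin d → ℂ)
    (hlam : ∀ i, lam i ∈ Polydisk d) (hdist : Function.Injective lam) :
    ((∃ ε > (0:ℝ), ∀ i : ℕ, ∀ F : Finset ℕ, i ∉ F →
        ε ≤ ∏ j ∈ F, gleasonDist (lam i) (lam j)) →
      (∀ w : ℕ → ℂ, (∃ Cw : ℝ, ∀ i, ‖w i‖ ≤ Cw) →
        ∃ φ : (Fin d → ℂ) → ℂ, DifferentiableOn ℂ φ (Polydisk d) ∧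
          (∃ Cφ : ℝ, ∀ z ∈ Polydisk d, ‖φ z‖ ≤ Cφ) ∧
          ∀ i, φ (lam i) = w i)) ∧
    ((∀ w : ℕ → ℂ, (∃ Cw : ℝ, ∀ i, ‖w i‖ ≤ Cw) →
        ∃ φ : (Fin d → ℂ) → ℂ, DifferentiableOn ℂ φ (Polydisk d) ∧
          (∃ Cφ : ℝ, ∀ z ∈ Polydisk d, ‖φ z‖ ≤ Cφ) ∧
          ∀ i, φ (lam i) = w i) →
      ((∃ ε > (0:ℝ), ∀ i j : ℕ, i ≠ j → ε ≤ gleasonDist (lam i) (lam j)) ∧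
        ∃ M > (0:ℝ), ∀ (F : Finset ℕ) (a : ℕ → ℂ),
          ‖∑ i ∈ F, ∑ j ∈ F, a i * starRingEnd ℂ (a j) *
              (szegoKernel (lam i) (lam j) /
                (Real.sqrt ((szegoKernel (lam i) (lam i)).re *
                  (szegoKernel (lam j) (lam j)).re) : ℂ))‖ ≤
            M * ∑ i ∈ F, ‖a i‖ ^ 2)) := by
  have : NeZero d := ⟨by omega⟩
  exact berndtsson_chang_lin_general hlam
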